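/- arXiv:math/0307401 — 2 statements merged into one kernel-verified Lean document; each statement's English description precedes it below -/
import Mathlib

section
/- Let w be a finite binary word and let α > 2 be a real number. Then w is α-power-free if and only if μ(w) is α-power-free, where μ is the Thue–Morse morphism. -/
/-- The Thue–Morse morphism `μ` on a single letter (`false` = 0, `true` = 1):
`μ(0) = 01`, `μ(1) = 10`. -/
def muLetter : Bool → List Bool
  | false => [false, true]
  | true  => [true, false]

/-- The Thue–Morse morphism `μ` on binary words. -/
def mu (w : List Bool) : List Bool := (w.map muLetter).flatten

/-- `z` is a `β`-power (for a rational `β`): `z = xⁿx'` with `x'` a prefix of `x`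
and `n + |x'|/|x| = β`. -/
def IsPower (β : ℚ) (z : List Bool) : Prop :=
  ∃ (n : ℕ) (x x' : List Bool), x ≠ [] ∧ x' <+: x ∧
    z = (List.replicate n x).flatten ++ x' ∧
    (n : ℚ) + (x'.length : ℚ) / (x.length : ℚ) = β

/-- The finite word `w` is `α`-power-free: no subword (contiguous factor) of `w`
is a `β`-power for any rational `β ≥ α`. -/
def PowerFree (α : ℝ) (w : List Bool) : Prop :=
  ∀ z : List Bool, z <:+: w → ∀ β : ℚ, α ≤ (β : ℝ) → ¬ IsPower β z

/-- The finite word `w` contains an `α`-power: some subword of `w` is a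
`β`-power for some rational `β ≥ α`. -/
def ContainsPower (α : ℝ) (w : List Bool) : Prop :=
  ∃ z : List Bool, z <:+: w ∧ ∃ β : ℚ, α ≤ (β : ℝ) ∧ IsPower β z

/-- `z` is a (finite) subword of the infinite word `w : ℕ → Bool`. -/
def InfSubword (z : List Bool) (w : ℕ → Bool) : Prop :=
  ∃ i : ℕ, z = (List.range z.length).map fun k => w (i + k)

/-- The infinite word `w` is `α`-power-free. -/
def PowerFreeInf (α : ℝ) (w : ℕ → Bool) : Prop :=
  ∀ z : List Bool, InfSubword z w → ∀ β : ℚ, α ≤ (β : ℝ) → ¬ IsPower β z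

/-- The infinite word `w` contains an `α`-power. -/
def ContainsPowerInf (α : ℝ) (w : ℕ → Bool) : Prop :=
  ∃ z : List Bool, InfSubword z w ∧ ∃ β : ℚ, α ≤ (β : ℝ) ∧ IsPower β z

/-- The length-`n` prefix of an infinite word. -/
def wordPrefix (w : ℕ → Bool) (n : ℕ) : List Bool := (List.range n).map w

/-- `h : Σ₂* → Σ₂*` is a morphism. -/
def IsMorphism (h : List Bool → List Bool) : Prop :=
  ∀ x y : List Bool, h (x ++ y) = h x ++ h y

/-- A morphism is non-erasing if it erases neither letter. -/
def NonErasing (h : List Bool → List Bool) : Prop :=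
  h [false] ≠ [] ∧ h [true] ≠ []

/-- The infinite word `u` is the image of the infinite word `w` under the morphism `h`
(obtained by concatenating the images of the letters of `w`): every `h(w[0..n))` is a
prefix of `u`, and these prefixes exhaust `u`. -/
def IsMorphImage (h : List Bool → List Bool) (w u : ℕ → Bool) : Prop :=
  (∀ n : ℕ, wordPrefix u (h (wordPrefix w n)).length = h (wordPrefix w n)) ∧
  ∀ m : ℕ, ∃ n : ℕ, m ≤ (h (wordPrefix w n)).length

/-- The complementation morphism `E` : `E(0) = 1`, `E(1) = 0`. -/
def eMorph (w : List Bool) : List Bool := w.map fun b => !b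

/-- The Thue–Morse word `μ^ω(0)` (`tm n` = parity of the binary digit sum of `n`). -/
def tm (n : ℕ) : Bool := (Nat.digits 2 n).sum % 2 == 1

/-- `μ³(0) = 01101001`. -/
def w01101001 : List Bool := [false, true, true, false, true, false, false, true]

/-- `μ³(1) = 10010110`. -/
def w10010110 : List Bool := [true, false, false, true, false, true, true, false]

/-!
Write a `β`-power as a word `z` with a positive period `p`, so that `β = |z| / p`. Applying `μ`
doubles both length and period, so powers in `w` give powers in `μ(w)` with the same exponent.

Conversely, let `z` be a factor of `μ(w)` with a period `p` and `|z| > 2p`. If `p = 2q`, the blocks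
of `μ(w)` that `z` meets are the image of a factor of `w` which has the period `q`, because either
letter of a block determines the other. The period `p` cannot be odd: letters inside a block differ,
and a shift by `p` exchanges the pairs of neighbours inside a block with those across two blocks, so
that neighbours differ everywhere in a prefix of `z` of length at least `p + 1`. That prefix has the
periods `2` and `p`, hence `1` by the theorem of Fine and Wilf, which is absurd.
-/

section Period

variable {A : Type*} {x z : List A} {p : ℕ}

lemma flatten_replicate_append_prefix_append_self {x' : List A} (h : x' <+: x) (n : ℕ) :
    (List.replicate n x).flatten ++ x' <+: x ++ ((List.replicate n x).flatten ++ x') := by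
  induction n with
  | zero => simpa using h.trans (List.prefix_append x x')
  | succ n ih => simpa [List.replicate_succ, List.append_assoc] using ih

lemma exists_eq_flatten_replicate_append {z : List A} (hx : x ≠ []) (h : z <+: x ++ z) :
    ∃ (n : ℕ) (x' : List A), x' <+: x ∧ z = (List.replicate n x).flatten ++ x' := by
  rcases le_total z.length x.length with hzx | hxz
  · exact ⟨0, z, List.prefix_of_prefix_length_le h (List.prefix_append x z) hzx, by simp⟩
  · obtain ⟨y, rfl⟩ := List.prefix_of_prefix_length_le (List.prefix_append x z) h hxz
    obtain ⟨n, x', hx', hy⟩ :=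
      exists_eq_flatten_replicate_append hx ((List.prefix_append_right_inj x).1 h)
    refine ⟨n + 1, x', hx', ?_⟩
    rw [List.replicate_succ, List.flatten_cons, List.append_assoc, ← hy]
termination_by z.length
decreasing_by grind [List.length_pos_iff]

lemma hasPeriod_length_of_prefix_append_self (h : z <+: x ++ z) : z.HasPeriod x.length := by
  rcases le_total z.length x.length with hzx | hxz
  · exact List.hasPeriod_of_length_le z x.length hzx
  · have hx : z.take x.length = x := (List.prefix_iff_eq_take.1
      (List.prefix_of_prefix_length_le (List.prefix_append x z) h hxz)).symm
    rwa [List.HasPeriod, hx]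

lemma exists_prefix_append_self_of_hasPeriod [Nonempty A] (h : z.HasPeriod p) :
    ∃ x : List A, x.length = p ∧ z <+: x ++ z := by
  rcases le_total p z.length with hpz | hzp
  · exact ⟨z.take p, List.length_take_of_le hpz, h⟩
  · obtain ⟨a⟩ := ‹Nonempty A›
    exact ⟨z ++ List.replicate (p - z.length) a, by simp [hzp], by simp⟩

lemma hasPeriod_two_of_isChain_ne {u : List Bool} (h : u.IsChain (· ≠ ·)) : u.HasPeriod 2 := by
  rw [List.hasPeriod_iff_getElem?]
  intro i hi
  have h₁ := List.isChain_iff_getElem.1 h i (by omega)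
  have h₂ := List.isChain_iff_getElem.1 h (i + 1) (by omega)
  rw [List.getElem?_eq_getElem (by omega), List.getElem?_eq_getElem (by omega)]
  exact congrArg some ((Bool.eq_not_of_ne h₁).trans (Bool.eq_not_of_ne h₂.symm).symm)

lemma not_hasPeriod_one_of_isChain_ne {u : List A} (h : u.IsChain (· ≠ ·)) (hu : 2 ≤ u.length) :
    ¬ u.HasPeriod 1 := by
  intro h₁
  have h₀₁ := List.hasPeriod_iff_getElem?.1 h₁ 0 (by omega)
  rw [List.getElem?_eq_getElem (by omega), List.getElem?_eq_getElem (by omega)] at h₀₁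
  exact List.isChain_iff_getElem.1 h 0 (by omega) (Option.some_injective _ h₀₁)

end Period

section Power

variable {α : ℝ} {β : ℚ} {w z : List Bool}

lemma length_flatten_replicate_append_div {A : Type*} {x : List A} (hx : x ≠ []) (n : ℕ)
    (x' : List A) :
    (((List.replicate n x).flatten ++ x').length : ℚ) / x.length = n + x'.length / x.length := by
  have hx0 : (x.length : ℚ) ≠ 0 := by simpa using hx
  rw [List.length_append, List.length_flatten, List.map_replicate, List.sum_replicate, smul_eq_mul]
  push_cast
  rw [add_div, mul_div_cancel_right₀ _ hx0]

lemma isPower_iff_hasPeriod :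
    IsPower β z ↔ ∃ p : ℕ, 0 < p ∧ z.HasPeriod p ∧ (z.length : ℚ) / p = β := by
  constructor
  · rintro ⟨n, x, x', hx, hx', rfl, rfl⟩
    exact ⟨x.length, List.length_pos_iff.2 hx,
      hasPeriod_length_of_prefix_append_self (flatten_replicate_append_prefix_append_self hx' n),
      length_flatten_replicate_append_div hx n x'⟩
  · rintro ⟨p, hp, hz, rfl⟩
    obtain ⟨x, rfl, hxz⟩ := exists_prefix_append_self_of_hasPeriod hz
    have hx : x ≠ [] := List.length_pos_iff.1 hp
    obtain ⟨n, x', hx', rfl⟩ := exists_eq_flatten_replicate_append hx hxz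
    exact ⟨n, x, x', hx, hx', rfl, (length_flatten_replicate_append_div hx n x').symm⟩

lemma powerFree_iff_length_lt :
    PowerFree α w ↔
      ∀ z, z <:+: w → ∀ p : ℕ, 0 < p → z.HasPeriod p → (z.length : ℝ) < α * p := by
  constructor
  · intro h z hz p hp hper
    by_contra! hle
    refine h z hz (z.length / p) ?_ (isPower_iff_hasPeriod.2 ⟨p, hp, hper, rfl⟩)
    push_cast
    rwa [le_div_iff₀ (by positivity)]
  · intro h z hz β hβ hpow
    obtain ⟨p, hp, hper, rfl⟩ := isPower_iff_hasPeriod.1 hpow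
    push_cast at hβ
    rw [le_div_iff₀ (by positivity)] at hβ
    exact (h z hz p hp hper).not_ge hβ

end Power

section ThueMorse

variable {α : ℝ} {v w z : List Bool} {p q : ℕ}

lemma mu_cons (a : Bool) (w : List Bool) : mu (a :: w) = a :: (!a) :: mu w := by
  cases a <;> rfl

lemma mu_append (v w : List Bool) : mu (v ++ w) = mu v ++ mu w := by
  simp [mu]

lemma length_mu (w : List Bool) : (mu w).length = 2 * w.length := by
  induction w with
  | nil => rfl
  | cons a w ih => simp only [mu_cons, List.length_cons, ih]; omega

lemma getElem?_mu_two_mul (w : List Bool) (k : ℕ) : (mu w)[2 * k]? = w[k]? := by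
  induction w generalizing k with
  | nil => rfl
  | cons a w ih => cases k <;> simp [mu_cons, Nat.mul_succ, ih]

lemma getElem?_mu_two_mul_add_one (w : List Bool) (k : ℕ) :
    (mu w)[2 * k + 1]? = w[k]?.map not := by
  induction w generalizing k with
  | nil => rfl
  | cons a w ih => cases k <;> simp [mu_cons, Nat.mul_succ, ih]

lemma take_mu (w : List Bool) (k : ℕ) : (mu w).take (2 * k) = mu (w.take k) := by
  induction w generalizing k with
  | nil => simp [mu]
  | cons a w ih =>
    cases k with
    | zero => rfl
    | succ k => simp [mu_cons, Nat.mul_succ, ih]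

lemma drop_mu (w : List Bool) (k : ℕ) : (mu w).drop (2 * k) = mu (w.drop k) := by
  induction w generalizing k with
  | nil => simp [mu]
  | cons a w ih => cases k <;> simp [mu_cons, Nat.mul_succ, ih]

lemma mu_prefix_mu (h : v <+: w) : mu v <+: mu w := by
  obtain ⟨t, rfl⟩ := h
  exact ⟨mu t, (mu_append v t).symm⟩

lemma mu_infix_mu (h : v <:+: w) : mu v <:+: mu w := by
  obtain ⟨s, t, rfl⟩ := h
  exact ⟨mu s, mu t, by simp only [mu_append]⟩

lemma hasPeriod_mu (h : w.HasPeriod p) : (mu w).HasPeriod (2 * p) := by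
  rw [List.HasPeriod, take_mu, ← mu_append]
  exact mu_prefix_mu h

lemma exists_mu_eq_append_of_prefix_mu (h : z <+: mu w) :
    ∃ v t, v <+: w ∧ mu v = z ++ t ∧ t.length ≤ 1 := by
  obtain ⟨b, hb⟩ := h
  refine ⟨w.take ((z.length + 1) / 2), b.take (2 * ((z.length + 1) / 2) - z.length),
    List.take_prefix _ _, ?_, by simp only [List.length_take]; omega⟩
  rw [← take_mu, ← hb, List.take_append, List.take_of_length_le (by omega)]

lemma exists_mu_eq_append_of_suffix_mu (h : z <:+ mu w) :
    ∃ v s, v <:+ w ∧ mu v = s ++ z ∧ s.length ≤ 1 := by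
  obtain ⟨a, ha⟩ := h
  refine ⟨w.drop (a.length / 2), a.drop (2 * (a.length / 2)),
    List.drop_suffix _ _, ?_, by simp only [List.length_drop]; omega⟩
  rw [← drop_mu, ← ha, List.drop_append_of_le_length (by omega)]

lemma exists_mu_eq_append_of_infix_mu (h : z <:+: mu w) :
    ∃ v s t, v <:+: w ∧ mu v = s ++ z ++ t ∧ s.length ≤ 1 ∧ t.length ≤ 1 := by
  obtain ⟨y, hzy, hyw⟩ := List.infix_iff_prefix_suffix.1 h
  obtain ⟨u, s, huw, hu, hs⟩ := exists_mu_eq_append_of_suffix_mu hyw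
  have hsz : s ++ z <+: mu u := hu ▸ (List.prefix_append_right_inj s).2 hzy
  obtain ⟨v, t, hvu, hv, ht⟩ := exists_mu_eq_append_of_prefix_mu hsz
  exact ⟨v, s, t, hvu.isInfix.trans huw.isInfix, hv, hs, ht⟩

lemma hasPeriod_of_mu_eq_append {s t : List Bool} (hv : mu v = s ++ z ++ t) (hs : s.length ≤ 1)
    (ht : t.length ≤ 1) (hz : z.HasPeriod (2 * q)) (hq : 2 * q < z.length) : v.HasPeriod q := by
  have hlen : 2 * v.length = s.length + z.length + t.length := by
    rw [← length_mu, hv, List.length_append, List.length_append]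
  have hshift : ∀ m, s.length ≤ m → m + 2 * q < s.length + z.length →
      (mu v)[m]? = (mu v)[m + 2 * q]? := by
    intro m hm hmq
    have := List.hasPeriod_iff_getElem?.1 hz (m - s.length) (by omega)
    grind
  rw [List.hasPeriod_iff_getElem?]
  intro k hk
  by_cases hsk : s.length ≤ 2 * k
  · have := hshift (2 * k) hsk (by omega)
    rwa [← Nat.mul_add, getElem?_mu_two_mul, getElem?_mu_two_mul] at this
  · -- `z` begins with the second letter of the block at `k = 0`
    have := hshift (2 * k + 1) (by omega) (by omega)
    rw [show 2 * k + 1 + 2 * q = 2 * (k + q) + 1 by ring, getElem?_mu_two_mul_add_one,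
      getElem?_mu_two_mul_add_one] at this
    exact Option.map_injective Bool.not_injective this

lemma exists_infix_hasPeriod_of_infix_mu (hzw : z <:+: mu w) (hz : z.HasPeriod (2 * q))
    (hq : 2 * q < z.length) : ∃ v, v <:+: w ∧ v.HasPeriod q ∧ z.length ≤ 2 * v.length := by
  obtain ⟨v, s, t, hvw, hv, hs, ht⟩ := exists_mu_eq_append_of_infix_mu hzw
  refine ⟨v, hvw, hasPeriod_of_mu_eq_append hv hs ht hz hq, ?_⟩
  rw [← length_mu, hv, List.length_append, List.length_append]
  omega

lemma getElem?_mu_succ_of_even {i : ℕ} (w : List Bool) (hi : Even i) :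
    (mu w)[i + 1]? = (mu w)[i]?.map not := by
  obtain ⟨k, rfl⟩ := even_iff_exists_two_mul.1 hi
  rw [getElem?_mu_two_mul_add_one, getElem?_mu_two_mul]

lemma isChain_ne_take_of_odd_hasPeriod (hzw : z <:+: mu w) (hz : z.HasPeriod p) (hp : Odd p) :
    (z.take (z.length - p)).IsChain (· ≠ ·) := by
  obtain ⟨a, b, hab⟩ := hzw
  have hne : ∀ k, Even (a.length + k) → (hk : k + 1 < z.length) → z[k] ≠ z[k + 1] := by
    intro k heven hk
    have := getElem?_mu_succ_of_even w heven
    grind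
  have hshift : ∀ k, (hk : k + p < z.length) → z[k] = z[k + p] := by
    intro k hk
    have := List.hasPeriod_iff_getElem?.1 hz k (by omega)
    grind
  rw [List.isChain_iff_getElem]
  intro k hk
  rw [List.length_take] at hk
  rw [List.getElem_take, List.getElem_take]
  rcases Nat.even_or_odd (a.length + k) with heven | hodd
  · exact hne k heven (by omega)
  · have hpar : Even (a.length + (k + p)) := add_assoc a.length k p ▸ hodd.add_odd hp
    have hblock : z[k + p] ≠ z[k + p + 1] := hne (k + p) hpar (by omega)
    rw [hshift k (by omega), hshift (k + 1) (by omega)]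
    simpa only [Nat.add_right_comm k 1 p] using hblock

lemma even_of_infix_mu_of_hasPeriod (hzw : z <:+: mu w) (hz : z.HasPeriod p)
    (hp : 2 * p < z.length) : Even p := by
  by_contra hodd
  rw [Nat.not_even_iff_odd] at hodd
  have hpos := hodd.pos
  set u := z.take (z.length - p) with hu
  have hlen : p + 1 ≤ u.length := by rw [hu, List.length_take]; omega
  have hchain : u.IsChain (· ≠ ·) := isChain_ne_take_of_odd_hasPeriod hzw hz hodd
  have hper : u.HasPeriod p := hz.infix (List.take_prefix _ _).isInfix
  have hgcd : p.gcd 2 = 1 := Nat.coprime_two_right.2 hodd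
  have hone : u.HasPeriod (p.gcd 2) :=
    hper.gcd (hasPeriod_two_of_isChain_ne hchain) (by omega)
  exact not_hasPeriod_one_of_isChain_ne hchain (by omega) (hgcd ▸ hone)

lemma powerFree_of_powerFree_mu (h : PowerFree α (mu w)) : PowerFree α w := by
  rw [powerFree_iff_length_lt] at h ⊢
  intro z hz p hp hper
  have := h (mu z) (mu_infix_mu hz) (2 * p) (by omega) (hasPeriod_mu hper)
  rw [length_mu] at this
  push_cast at this
  linarith

lemma powerFree_mu (hα : 2 < α) (h : PowerFree α w) : PowerFree α (mu w) := by
  rw [powerFree_iff_length_lt] at h ⊢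
  intro z hz p hp hper
  by_contra! hle
  have hlong : 2 * p < z.length := by
    have : (2 * p : ℝ) < z.length := (mul_lt_mul_of_pos_right hα (by positivity)).trans_le hle
    exact_mod_cast this
  obtain ⟨q, rfl⟩ := even_iff_exists_two_mul.1 (even_of_infix_mu_of_hasPeriod hz hper hlong)
  obtain ⟨v, hvw, hvq, hzv⟩ := exists_infix_hasPeriod_of_infix_mu hz hper (by omega)
  have hlt : (v.length : ℝ) < α * q := h v hvw q (by omega) hvq
  have : (z.length : ℝ) ≤ 2 * v.length := by exact_mod_cast hzv
  push_cast at hle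
  linarith

end ThueMorse

/-- Let `w` be a finite binary word and `α > 2` a real number.  Then `w` is
`α`-power-free iff `μ(w)` is `α`-power-free. -/
theorem thue_morse_preserves_power_freeness (w : List Bool) (α : ℝ) (hα : 2 < α) :
    PowerFree α w ↔ PowerFree α (mu w) :=
  ⟨powerFree_mu hα, powerFree_of_powerFree_mu⟩
end

section
/- Let i, j be positive integers, and let w and s be 7/3-power-free finite binary words such that |w| = 2^{i+1} − 1 or |w| = 3·2^i − 1, and |s| = 2^{j+1} − 1 or |s| = 3·2^j − 1, with |s| ≥ |w|. Let a be a letter of Σ₂. Then the word s a w a w a s contains a 7/3-power as a subword. -/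
/-!
Put `n = |w| + 1` and `m = |s| + 1`. If `n ≤ 3`, the factor `a w a w a`, of period `n` and length
`2 n + 1`, is already a `7/3`-power. Otherwise, in a `7/3`-power-free binary word all doubled
letters away from the two ends start at positions of the same parity. The word repeats `a w a` at
distance `n` and `s` at distance `m + 2 n`, so if `n` or `m` is odd, doubled letters would occur at
both parities; hence `w` or `s` is almost alternating, and a factor `x y x y x` appears. If `n` and
`m` are even, then up to a shift the word is cut into blocks `x y` with `x ≠ y`, that is, it is a
factor of an image under the Thue–Morse morphism. Keeping every second letter undoes the morphism,
yields a word of the same shape with `n` and `m` halved, and reflects `7/3`-powers.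
-/

lemma eq_flatten_replicate_append_take {α : Type*} {x : List α} (hx : x ≠ []) (z : List α)
    (h : z <+: x ++ z) :
    z = (List.replicate (z.length / x.length) x).flatten ++ x.take (z.length % x.length) := by
  have hpos : 0 < x.length := List.length_pos_iff.mpr hx
  rcases lt_or_ge z.length x.length with hlt | hge
  · have hzx : z <+: x := List.prefix_of_prefix_length_le h (List.prefix_append x z) hlt.le
    simpa [Nat.div_eq_of_lt hlt, Nat.mod_eq_of_lt hlt] using List.prefix_iff_eq_take.mp hzx
  · obtain ⟨y, rfl⟩ : x <+: z := List.prefix_of_prefix_length_le (List.prefix_append x z) h hge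
    have ih := eq_flatten_replicate_append_take hx y ((List.prefix_append_right_inj x).mp h)
    rw [List.length_append, Nat.add_div_left _ hpos, Nat.add_mod_left, List.replicate_succ,
      List.flatten_cons, List.append_assoc, ← ih]
termination_by z.length
decreasing_by grind

lemma isPower_of_hasPeriod {z : List Bool} {q : ℕ} (hq : 0 < q) (hqz : q ≤ z.length)
    (h : z.HasPeriod q) : IsPower (z.length / q) z := by
  have hlen : (z.take q).length = q := List.length_take_of_le hqz
  have hne : z.take q ≠ [] := List.ne_nil_of_length_pos (hlen.symm ▸ hq)
  refine ⟨_, _, _, hne, List.take_prefix _ _, eq_flatten_replicate_append_take hne z h, ?_⟩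
  have hdiv : (q * (z.length / q : ℕ) + (z.length % q : ℕ) : ℚ) = z.length :=
    mod_cast Nat.div_add_mod z.length q
  rw [hlen, List.length_take_of_le (hlen.symm ▸ (Nat.mod_lt _ hq).le), ← hdiv]
  field_simp

/-- The word `f 1 ⋯ f (N - 1)` has a factor `f b ⋯ f (e - 1)` of period `q` and exponent
`(e - b) / q ≥ α`: this is `ContainsPower α` for words given by functions. Positions start at `1`
so that the word of every second letter is `fun k ↦ f (2 * k)`. -/
def HasPower (α : ℝ) (f : ℕ → Bool) (N : ℕ) : Prop :=
  ∃ b e q : ℕ, 0 < b ∧ e ≤ N ∧ 0 < q ∧ α * q ≤ (e : ℝ) - b ∧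
    ∀ k, b ≤ k → k + q < e → f k = f (k + q)

lemma HasPower.mono {α β : ℝ} {f : ℕ → Bool} {N : ℕ} (hαβ : α ≤ β) (h : HasPower β f N) :
    HasPower α f N := by
  obtain ⟨b, e, q, hb, he, hq, hexp, hper⟩ := h
  exact ⟨b, e, q, hb, he, hq, (by gcongr : α * q ≤ β * q).trans hexp, hper⟩

lemma HasPower.of_reverse {α : ℝ} {f : ℕ → Bool} {N : ℕ}
    (h : HasPower α (fun k ↦ f (N - k)) N) : HasPower α f N := by
  obtain ⟨b, e, q, hb, he, hq, hexp, hper⟩ := h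
  by_cases hbe : b ≤ e
  · refine ⟨N - e + 1, N - b + 1, q, by omega, by omega, hq, ?_, fun k hk hke ↦ ?_⟩
    · push_cast [he, hbe.trans he]
      linarith
    · have hk' : f (N - (N - (k + q))) = f (N - (N - (k + q) + q)) :=
        hper (N - (k + q)) (by omega) (by omega)
      rw [Nat.sub_sub_self (by omega), show N - (N - (k + q) + q) = k by omega] at hk'
      exact hk'.symm
  · exact ⟨b, e, q, hb, he, hq, hexp, fun k hk hke ↦ by omega⟩

-- The letter `d` only fills position `0`, which `HasPower` ignores.
lemma containsPower_of_hasPower {α : ℝ} (hα : 1 ≤ α) {v : List Bool} {d : Bool}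
    (h : HasPower α (fun k ↦ (d :: v).getD k d) (v.length + 1)) : ContainsPower α v := by
  obtain ⟨b, e, q, hb, he, hq, hexp, hper⟩ := h
  obtain ⟨b, rfl⟩ := Nat.exists_eq_add_one.mpr hb
  set z : List Bool := (v.drop b).take (e - (b + 1)) with hz
  have hqe : b + 1 + q ≤ e := by
    have : (q : ℝ) ≤ e - (b + 1 : ℕ) := (le_mul_of_one_le_left q.cast_nonneg hα).trans hexp
    exact_mod_cast le_sub_iff_add_le'.mp this
  have hzlen : z.length = e - (b + 1) := by
    simp only [hz, List.length_take, List.length_drop]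
    omega
  have hperiod : z.HasPeriod q := List.hasPeriod_iff_getElem?.mpr fun i hi ↦ by
    have hletter := hper (b + 1 + i) (by omega) (by omega)
    rw [show b + 1 + i + q = b + (i + q) + 1 by omega, show b + 1 + i = b + i + 1 by omega]
      at hletter
    simpa [hz, List.getElem?_take, show i < e - (b + 1) by omega,
      show i + q < e - (b + 1) by omega, show b + i < v.length by omega,
      show b + (i + q) < v.length by omega] using hletter
  refine ⟨z, (List.take_prefix _ _).isInfix.trans (List.drop_suffix b v).isInfix,
    z.length / q, ?_, isPower_of_hasPeriod hq (by omega) hperiod⟩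
  push_cast [hzlen, show b + 1 ≤ e by omega]
  rw [le_div_iff₀ (by positivity)]
  exact_mod_cast hexp

lemma bool_eq_of_ne_of_ne {a b c : Bool} (hab : a ≠ b) (hbc : b ≠ c) : a = c := by
  rw [Bool.eq_not_of_ne hab, Bool.eq_not_of_ne hbc, Bool.not_not]

section Doubles

variable {f : ℕ → Bool} {N k : ℕ}

lemma hasPower_of_eq_succ_of_eq_succ (hk : 0 < k) (hkN : k + 2 < N) (h₁ : f k = f (k + 1))
    (h₂ : f (k + 1) = f (k + 2)) : HasPower 3 f N := by
  refine ⟨k, k + 3, 1, hk, hkN, one_pos, by simp, fun j hj hj' ↦ ?_⟩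
  obtain rfl | rfl : j = k ∨ j = k + 1 := by omega
  exacts [h₁, h₂]

lemma hasPower_of_alternating (hk : 0 < k) (hkN : k + 4 < N)
    (h : ∀ i < 4, f (k + i) ≠ f (k + i + 1)) : HasPower (5 / 2) f N := by
  refine ⟨k, k + 5, 2, hk, hkN, two_pos, by norm_num, fun j hj hj' ↦ ?_⟩
  obtain ⟨i, rfl⟩ := Nat.exists_eq_add_of_le hj
  exact bool_eq_of_ne_of_ne (h i (by omega)) (h (i + 1) (by omega))

variable (hf : ¬ HasPower (7 / 3) f N)
include hf

lemma succ_ne_of_eq_succ (hk : 0 < k) (hkN : k + 2 < N) (h : f k = f (k + 1)) :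
    f (k + 1) ≠ f (k + 2) :=
  fun h' ↦ hf ((hasPower_of_eq_succ_of_eq_succ hk hkN h h').mono (by norm_num))

lemma exists_eq_succ_of_five (hk : 0 < k) (hkN : k + 4 < N) :
    ∃ i < 4, f (k + i) = f (k + i + 1) := by
  by_contra! h
  exact hf ((hasPower_of_alternating hk hkN h).mono (by norm_num))

-- Two doubles at distance `3` extend to `y x x y x x y`.
lemma add_three_ne_of_eq_succ (hk : 2 ≤ k) (hkN : k + 5 < N) (h : f k = f (k + 1)) :
    f (k + 3) ≠ f (k + 4) := by
  intro h'
  obtain ⟨c, rfl⟩ := Nat.exists_eq_add_of_le' (show 1 ≤ k by omega)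
  have h₀ : f c ≠ f (c + 1) := fun h₀ ↦ succ_ne_of_eq_succ hf (by omega) (by omega) h₀ h
  have h₂ : f (c + 2) ≠ f (c + 3) := succ_ne_of_eq_succ hf (by omega) (by omega) h
  have h₃ : f (c + 3) ≠ f (c + 4) := fun h₃ ↦ succ_ne_of_eq_succ hf (by omega) (by omega) h₃ h'
  have h₅ : f (c + 5) ≠ f (c + 6) := succ_ne_of_eq_succ hf (by omega) (by omega) h'
  refine hf ⟨c, c + 7, 3, by omega, by omega, by omega, by norm_num, fun j hj hj' ↦ ?_⟩
  obtain rfl | rfl | rfl | rfl : j = c ∨ j = c + 1 ∨ j = c + 2 ∨ j = c + 3 := by omega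
  exacts [bool_eq_of_ne_of_ne h₀ (h ▸ h₂), h.trans (bool_eq_of_ne_of_ne h₂ h₃),
    (bool_eq_of_ne_of_ne h₂ h₃).trans h', bool_eq_of_ne_of_ne h₃ (h' ▸ h₅)]

lemma mod_two_eq_of_eq_succ_of_le {k l : ℕ} (hkl : k ≤ l) (hk : 2 ≤ k) (hl : l + 2 < N)
    (hfk : f k = f (k + 1)) (hfl : f l = f (l + 1)) : k % 2 = l % 2 := by
  by_contra hpar
  have hdist₁ : l ≠ k + 1 := by
    rintro rfl
    exact succ_ne_of_eq_succ hf (by omega) (by omega) hfk hfl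
  have hdist₃ : l ≠ k + 3 := by
    rintro rfl
    exact add_three_ne_of_eq_succ hf hk (by omega) hfk hfl
  -- The doubles nearest to `k` and at odd distance from it are excluded,
  -- so a window of five letters forces one at distance `2` or `4`.
  obtain ⟨i, hi, hfi⟩ := exists_eq_succ_of_five hf (k := k + 1) (by omega) (by omega)
  have hi₀ : i ≠ 0 := by
    rintro rfl
    exact succ_ne_of_eq_succ hf (by omega) (by omega) hfk hfi
  have hi₂ : i ≠ 2 := by
    rintro rfl
    exact add_three_ne_of_eq_succ hf hk (by omega) hfk hfi
  have := mod_two_eq_of_eq_succ_of_le (k := k + 1 + i) (by omega) (by omega) hl hfi hfl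
  omega
termination_by l - k

lemma mod_two_eq_of_eq_succ {l : ℕ} (hk : 2 ≤ k) (hkN : k + 2 < N) (hl : 2 ≤ l)
    (hlN : l + 2 < N) (hfk : f k = f (k + 1)) (hfl : f l = f (l + 1)) : k % 2 = l % 2 := by
  rcases le_total k l with h | h
  · exact mod_two_eq_of_eq_succ_of_le hf h hk hlN hfk hfl
  · exact (mod_two_eq_of_eq_succ_of_le hf h hl hkN hfl hfk).symm

lemma exists_parity_forall_interior_ne_succ :
    ∃ p < 2, ∀ k, 2 ≤ k → k + 2 < N → k % 2 = p → f k ≠ f (k + 1) := by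
  by_cases h : ∃ l, 2 ≤ l ∧ l + 2 < N ∧ f l = f (l + 1)
  · obtain ⟨l, hl, hlN, hfl⟩ := h
    refine ⟨1 - l % 2, by omega, fun k hk hkN hpar hfk ↦ ?_⟩
    have := mod_two_eq_of_eq_succ hf hk hkN hl hlN hfk hfl
    omega
  · exact ⟨0, two_pos, fun k hk hkN _ hfk ↦ h ⟨k, hk, hkN, hfk⟩⟩

end Doubles

-- The period doubles, and the factor starts at `2 b - p` so that it consists of whole blocks.
lemma hasPower_of_hasPower_two_mul {α : ℝ} {f : ℕ → Bool} {M p : ℕ} (hp : p < 2)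
    (hne : ∀ k, 0 < k → k + 1 < 2 * M → k % 2 = p → f k ≠ f (k + 1))
    (h : HasPower α (fun k ↦ f (2 * k)) M) : HasPower α f (2 * M) := by
  obtain ⟨b, e, q, hb, he, hq, hexp, hper⟩ := h
  refine ⟨2 * b - p, 2 * e - p, 2 * q, by omega, by omega, by omega, ?_, fun k hk hke ↦ ?_⟩
  · have he' : 2 * (e : ℝ) ≤ (2 * e - p : ℕ) + p := by
      exact_mod_cast (show 2 * e ≤ 2 * e - p + p by omega)
    have hb' : ((2 * b - p : ℕ) : ℝ) = 2 * b - p := by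
      rw [Nat.cast_sub (by omega), Nat.cast_mul, Nat.cast_two]
    push_cast at he' ⊢
    linarith
  · have hper' : ∀ j, b ≤ j → j + q < e → f (2 * j) = f (2 * j + 2 * q) := fun j hj hje ↦ by
      simpa only [mul_add] using hper j hj hje
    rcases Nat.even_or_odd' k with ⟨j, rfl | rfl⟩
    · exact hper' j (by omega) (by omega)
    rcases (show p = 0 ∨ p = 1 by omega) with rfl | rfl
    · have hj := hper' j (by omega) (by omega)
      have h₁ := hne (2 * j) (by omega) (by omega) (by omega)
      have h₂ := hne (2 * j + 2 * q) (by omega) (by omega) (by omega)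
      rw [add_right_comm]
      exact bool_eq_of_ne_of_ne h₁.symm (hj ▸ h₂)
    · have hj := hper' (j + 1) (by omega) (by omega)
      have h₁ := hne (2 * j + 1) (by omega) (by omega) (by omega)
      have h₂ := hne (2 * j + 1 + 2 * q) (by omega) (by omega) (by omega)
      rw [show 2 * j + 1 + 2 * q + 1 = 2 * (j + 1) + 2 * q by ring, ← hj] at h₂
      exact bool_eq_of_ne_of_ne h₁ h₂.symm

lemma getD_append_append {α : Type*} (x y z : List α) (d : α) {k : ℕ} (hk : k < y.length) :
    (x ++ (y ++ z)).getD (x.length + k) d = y.getD k d := by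
  rw [List.getD_append_right _ _ _ _ (Nat.le_add_right _ _), Nat.add_sub_cancel_left,
    List.getD_append _ _ _ _ hk]

/-- The word `f 1 ⋯ f (2 * m + 2 * n - 1)` has the shape `s a w a w a s` with `|s| = m - 1` and
`|w| = n - 1`; the three letters `a` stand at the positions `m`, `m + n` and `m + 2 * n`. -/
structure IsSawawas (f : ℕ → Bool) (m n : ℕ) : Prop where
  eq_add_of_mid : ∀ k, m ≤ k → k ≤ m + n → f k = f (k + n)
  eq_add_of_ends : ∀ k, 0 < k → k < m → f k = f (m + 2 * n + k)

namespace IsSawawas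

variable {f : ℕ → Bool} {m n : ℕ}

lemma of_list (w s : List Bool) (a : Bool) :
    IsSawawas (fun k ↦ (a :: (s ++ [a] ++ w ++ [a] ++ w ++ [a] ++ s)).getD k a)
      (s.length + 1) (w.length + 1) where
  eq_add_of_mid k hk hkn := by
    obtain ⟨t, rfl⟩ := Nat.exists_eq_add_of_le hk
    have ht : t < (a :: w ++ [a]).length := by
      simp only [List.length_append, List.length_cons, List.length_nil]
      omega
    have h₁ := getD_append_append (a :: s) (a :: w ++ [a]) (w ++ [a] ++ s) a ht
    have h₂ := getD_append_append (a :: s ++ a :: w) (a :: w ++ [a]) s a ht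
    simpa [add_assoc, add_comm, add_left_comm] using h₁.trans h₂.symm
  eq_add_of_ends k _ hk := by
    have h₁ := getD_append_append [] (a :: s) (a :: w ++ a :: w ++ a :: s) a hk
    have h₂ := getD_append_append (a :: s ++ a :: w ++ a :: w) (a :: s) [] a hk
    simpa [add_assoc, add_comm, add_left_comm, two_mul] using h₁.trans h₂.symm

lemma halve (h : IsSawawas f (2 * m) (2 * n)) : IsSawawas (fun k ↦ f (2 * k)) m n where
  eq_add_of_mid k hmk hkn := by
    simpa only [mul_add] using h.eq_add_of_mid (2 * k) (by omega) (by omega)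
  eq_add_of_ends k hk hkm := by
    simpa only [mul_add] using h.eq_add_of_ends (2 * k) (by omega) (by omega)

lemma reverse (h : IsSawawas f m n) : IsSawawas (fun k ↦ f (2 * m + 2 * n - k)) m n where
  eq_add_of_mid k hmk hkn := by
    have hk := h.eq_add_of_mid (2 * m + 2 * n - (k + n)) (by omega) (by omega)
    rw [show 2 * m + 2 * n - (k + n) + n = 2 * m + 2 * n - k by omega] at hk
    exact hk.symm
  eq_add_of_ends k hk hkm := by
    have hk := h.eq_add_of_ends (m - k) (by omega) (by omega)
    rw [show m + 2 * n + (m - k) = 2 * m + 2 * n - k by omega,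
      show m - k = 2 * m + 2 * n - (m + 2 * n + k) by omega] at hk
    exact hk.symm

lemma hasPower_of_le_three (h : IsSawawas f m n) (hm : 0 < m) (hn : 0 < n) (hn3 : n ≤ 3) :
    HasPower (7 / 3) f (2 * m + 2 * n) := by
  refine ⟨m, m + 2 * n + 1, n, hm, by omega, hn, ?_, fun k hk hkn ↦ ?_⟩
  · have : (n : ℝ) ≤ 3 := mod_cast hn3
    push_cast
    linarith
  · exact h.eq_add_of_mid k hk (by omega)

lemma hasPower_of_odd_right (h : IsSawawas f m n) (hm : 2 ≤ m) (hn5 : 5 ≤ n) (hn : n % 2 = 1) :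
    HasPower (7 / 3) f (2 * m + 2 * n) := by
  by_contra hf
  obtain ⟨i, hi, hfi⟩ := exists_eq_succ_of_five hf (k := m) (by omega) (by omega)
  have hfi' : f (m + i + n) = f (m + i + n + 1) := by
    rw [← h.eq_add_of_mid (m + i) (by omega) (by omega), hfi,
      h.eq_add_of_mid (m + i + 1) (by omega) (by omega), add_right_comm]
  have := mod_two_eq_of_eq_succ hf (by omega) (by omega) (by omega) (by omega) hfi hfi'
  omega

lemma apply_add_two_mul (h : IsSawawas f m n) : f (m + 2 * n) = f m := by
  rw [h.eq_add_of_mid m le_rfl (by omega), h.eq_add_of_mid (m + n) (by omega) le_rfl, add_assoc,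
    ← Nat.two_mul]

lemma eq_succ_iff_add (h : IsSawawas f m n) {k : ℕ} (hk : 0 < k) (hkm : k + 1 < m) :
    f k = f (k + 1) ↔ f (m + 2 * n + k) = f (m + 2 * n + k + 1) := by
  rw [h.eq_add_of_ends k hk (by omega), h.eq_add_of_ends (k + 1) (by omega) hkm, add_assoc _ k]

lemma ne_succ_of_odd_left (h : IsSawawas f m n) (hf : ¬ HasPower (7 / 3) f (2 * m + 2 * n))
    (hm : m % 2 = 1) {k : ℕ} (hk : 2 ≤ k) (hkm : k + 2 < m) : f k ≠ f (k + 1) := by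
  intro hfk
  have hfk' := (h.eq_succ_iff_add (by omega) (by omega)).mp hfk
  have := mod_two_eq_of_eq_succ hf hk (by omega) (by omega) (by omega) hfk hfk'
  omega

-- If `f 1 ≠ f 2`, then `a f 1 f 2 f 3 f 4`, in the second `s`, alternates; otherwise `f 2 ⋯ f 6`
-- does, where `f 5` is `a` if `m = 5`.
lemma hasPower_of_forall_odd_ne_succ (h : IsSawawas f m n) (hm5 : 5 ≤ m) (hm : m % 2 = 1)
    (hne : ∀ k, 2 ≤ k → k + 2 < 2 * m + 2 * n → k % 2 = 1 → f k ≠ f (k + 1)) :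
    HasPower (7 / 3) f (2 * m + 2 * n) := by
  by_contra hf
  have h₂ : f 2 ≠ f 3 := h.ne_succ_of_odd_left hf hm le_rfl (by omega)
  have h₃ : f 3 ≠ f 4 := hne 3 (by omega) (by omega) rfl
  by_cases h₁ : f 1 = f 2
  · have h₄ : f 4 ≠ f 5 := by
      obtain rfl | hm7 : m = 5 ∨ 7 ≤ m := by omega
      · have ha : f (5 + 2 * n) ≠ f (5 + 2 * n + 1) := hne _ (by omega) (by omega) (by omega)
        rwa [h.apply_add_two_mul, ← h.eq_add_of_ends 1 one_pos (by omega), h₁,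
          bool_eq_of_ne_of_ne h₂ h₃, ne_comm] at ha
      · exact h.ne_succ_of_odd_left hf hm (by omega) (by omega)
    obtain ⟨i, hi, hfi⟩ := exists_eq_succ_of_five hf (k := 2) (by omega) (by omega)
    interval_cases i
    exacts [h₂ hfi, h₃ hfi, h₄ hfi, hne 5 (by omega) (by omega) rfl hfi]
  · obtain ⟨i, hi, hfi⟩ := exists_eq_succ_of_five hf (k := m + 2 * n) (by omega) (by omega)
    interval_cases i
    · exact hne _ (by omega) (by omega) (by omega) hfi
    · exact h₁ ((h.eq_succ_iff_add one_pos (by omega)).mpr hfi)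
    · exact hne _ (by omega) (by omega) (by omega) hfi
    · exact h₃ ((h.eq_succ_iff_add three_pos (by omega)).mpr hfi)

lemma hasPower_of_odd_left (h : IsSawawas f m n) (hm5 : 5 ≤ m) (hm : m % 2 = 1) :
    HasPower (7 / 3) f (2 * m + 2 * n) := by
  by_contra hf
  obtain ⟨p, hp, hne⟩ := exists_parity_forall_interior_ne_succ hf
  obtain rfl | rfl : p = 0 ∨ p = 1 := by omega
  · refine hf (HasPower.of_reverse ?_)
    refine h.reverse.hasPower_of_forall_odd_ne_succ hm5 hm fun k hk hkN hk1 hfk ↦ ?_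
    refine hne (2 * m + 2 * n - (k + 1)) (by omega) (by omega) (by omega) ?_
    rw [← hfk, show 2 * m + 2 * n - (k + 1) + 1 = 2 * m + 2 * n - k by omega]
  · exact hf (h.hasPower_of_forall_odd_ne_succ hm5 hm hne)

lemma exists_parity_forall_ne_succ (h : IsSawawas f m n) (hm4 : 4 ≤ m) (hm : m % 2 = 0)
    (hf : ¬ HasPower (7 / 3) f (2 * m + 2 * n)) :
    ∃ p < 2, ∀ k, 0 < k → k + 1 < 2 * m + 2 * n → k % 2 = p → f k ≠ f (k + 1) := by
  obtain ⟨p, hp, hne⟩ := exists_parity_forall_interior_ne_succ hf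
  refine ⟨p, hp, fun k hk hkN hkp hfk ↦ ?_⟩
  by_cases hk1 : k = 1
  · exact hne (m + 2 * n + k) (by omega) (by omega) (by omega)
      ((h.eq_succ_iff_add hk (by omega)).mp hfk)
  by_cases hkN' : k + 2 < 2 * m + 2 * n
  · exact hne k (by omega) hkN' hkp hfk
  · obtain rfl : k = m + 2 * n + (m - 2) := by omega
    exact hne (m - 2) (by omega) (by omega) (by omega)
      ((h.eq_succ_iff_add (by omega) (by omega)).mpr hfk)

end IsSawawas

theorem IsSawawas.hasPower {f : ℕ → Bool} {m n : ℕ} (h : IsSawawas f m n) (hn : 0 < n)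
    (hnm : n ≤ m) : HasPower (7 / 3) f (2 * m + 2 * n) := by
  rcases le_or_gt n 3 with hn3 | hn4
  · exact h.hasPower_of_le_three (by omega) hn hn3
  rcases Nat.even_or_odd' n with ⟨n, rfl | rfl⟩
  swap
  · exact h.hasPower_of_odd_right (by omega) (by omega) (by omega)
  rcases Nat.even_or_odd' m with ⟨m, rfl | rfl⟩
  swap
  · exact h.hasPower_of_odd_left (by omega) (by omega)
  by_contra hf
  obtain ⟨p, hp, hne⟩ := h.exists_parity_forall_ne_succ (by omega) (by omega) hf
  have hhalf : HasPower (7 / 3) (fun k ↦ f (2 * k)) (2 * m + 2 * n) :=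
    h.halve.hasPower (by omega) (by omega)
  rw [← mul_add] at hf hne
  exact hf (hasPower_of_hasPower_two_mul hp hne hhalf)
termination_by n

theorem sawawas_contains_power_general (w s : List Bool) (hws : w.length ≤ s.length) (a : Bool) :
    ContainsPower (7 / 3 : ℝ) (s ++ [a] ++ w ++ [a] ++ w ++ [a] ++ s) := by
  refine containsPower_of_hasPower (d := a) (by norm_num) ?_
  convert (IsSawawas.of_list w s a).hasPower (by omega) (by omega) using 1
  simp only [List.length_append, List.length_singleton]
  ring

/-- For positive integers `i, j` and `7/3`-power-free words `w, s` with
`|w| = 2^{i+1} − 1` or `|w| = 3·2^i − 1`, `|s| = 2^{j+1} − 1` or `|s| = 3·2^j − 1`,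
and `|s| ≥ |w|`, the word `s a w a w a s` contains a `7/3`-power. -/
theorem sawawas_contains_power (i j : ℕ) (hi : 1 ≤ i) (hj : 1 ≤ j)
    (w s : List Bool) (hw : PowerFree (7/3 : ℝ) w) (hs : PowerFree (7/3 : ℝ) s)
    (hwl : w.length = 2 ^ (i + 1) - 1 ∨ w.length = 3 * 2 ^ i - 1)
    (hsl : s.length = 2 ^ (j + 1) - 1 ∨ s.length = 3 * 2 ^ j - 1)
    (hws : w.length ≤ s.length) (a : Bool) :
    ContainsPower (7/3 : ℝ) (s ++ [a] ++ w ++ [a] ++ w ++ [a] ++ s) :=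
  sawawas_contains_power_general w s hws a
end
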